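/- Every root r ∈ rad(D) can be written as r = Σ_{i=1}^{26} α_i ρ_i with all coefficients α_i ∈ ℤ[ξ]; consequently ⟨ρ̄, r⟩/|ρ̄|² = Σ_i α_i, so the height ht(r) is the absolute value of an algebraic integer in ℤ[ξ]. -/

import Mathlib

noncomputable section

open ComplexConjugate

namespace Bimonster

/-- The primitive cube root of unity `ω = e^{2πi/3}`. -/
def ω : ℂ := Complex.exp (2 * (Real.pi : ℂ) * Complex.I / 3)

/-- `θ = ω - ω̄ = √-3`. -/
def θ : ℂ := ω - conj ω

/-- `ξ = e^{-πi/6}`. -/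
def ξ : ℂ := Complex.exp (-((Real.pi : ℂ) * Complex.I) / 6)

/-- Membership in the ring of Eisenstein integers `ℰ = ℤ[ω] ⊆ ℂ`. -/
def EisP (z : ℂ) : Prop := ∃ a b : ℤ, z = (a : ℂ) + (b : ℂ) * ω

/-- The units of the ring of Eisenstein integers. -/
def EisUnit (z : ℂ) : Prop :=
  z = 1 ∨ z = -1 ∨ z = ω ∨ z = -ω ∨ z = ω ^ 2 ∨ z = -ω ^ 2

/-- The underlying 14-dimensional complex vector space of `L = 3E₈ ⊕ H`. -/
abbrev V : Type := Fin 14 → ℂ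

/-- The Hermitian form of `L = 3E₈ ⊕ H`: negative definite standard form on the twelve
`E₈`-coordinates, and the hyperbolic cell with Gram matrix `[[0, θ̄], [θ, 0]]` on the
last two coordinates.  It is conjugate-linear in the first variable. -/
def herm (u v : V) : ℂ :=
  -(∑ i : Fin 12, conj (u (Fin.castLE (by norm_num) i)) * v (Fin.castLE (by norm_num) i)) +
    conj (u 12) * conj θ * v 13 + conj (u 13) * θ * v 12

/-- First generator of the ternary tetracode `𝒞₄ ⊆ 𝔽₃⁴`. -/
def tet1 : Fin 4 → ℤ := ![1, 1, -1, 0]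

/-- Second generator of the ternary tetracode `𝒞₄ ⊆ 𝔽₃⁴`. -/
def tet2 : Fin 4 → ℤ := ![0, 1, 1, 1]

/-- The complex `E₈` lattice: vectors of `ℰ⁴` whose reduction mod `θ` lies in the
ternary tetracode. -/
def inE8 (w : Fin 4 → ℂ) : Prop :=
  (∀ i, EisP (w i)) ∧
    ∃ s t : ℤ, ∀ i : Fin 4, ∃ a b : ℤ,
      w i - ((tet1 i * s + tet2 i * t : ℤ) : ℂ) = θ * ((a : ℂ) + (b : ℂ) * ω)

/-- The lattice `L = 3E₈ ⊕ H` as a subset of `ℂ¹⁴`. -/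
def Lset : Set V :=
  {v | (∀ k : Fin 3,
      inE8 fun i : Fin 4 =>
        v ⟨4 * (k : ℕ) + (i : ℕ), by have hk := k.isLt; have hi := i.isLt; omega⟩) ∧
    EisP (v 12) ∧ EisP (v 13)}

/-- A root of `L`: a primitive lattice vector of norm `-3`. -/
def IsRoot (r : V) : Prop :=
  r ∈ Lset ∧ herm r r = -3 ∧
    ∀ α : ℂ, EisP α → ∀ y ∈ Lset, r = α • y → EisUnit α

/-- The `μ`-reflection in a vector `r`: `v ↦ v − (1−μ)·r·⟨r,v⟩/|r|²`. -/
def reflMap (μ : ℂ) (r v : V) : V := v - ((1 - μ) * herm r v / herm r r) • r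

/-- The automorphism group of the lattice `L`: invertible `ℂ`-linear maps preserving
the lattice and the Hermitian form. -/
def AutL : Subgroup (V ≃ₗ[ℂ] V) where
  carrier := {g | (∀ v : V, v ∈ Lset ↔ g v ∈ Lset) ∧ ∀ u v : V, herm (g u) (g v) = herm u v}
  one_mem' := ⟨fun _ => Iff.rfl, fun _ _ => rfl⟩
  mul_mem' := by
    rintro f g ⟨hf1, hf2⟩ ⟨hg1, hg2⟩
    refine ⟨fun v => ?_, fun u v => ?_⟩
    · exact (hg1 v).trans (hf1 (g v))
    · exact (hf2 (g u) (g v)).trans (hg2 u v)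
  inv_mem' := by
    rintro g ⟨hg1, hg2⟩
    refine ⟨fun v => ?_, fun u v => ?_⟩
    · have h := hg1 (g.symm v)
      have hv : g (g.symm v) = v := g.apply_symm_apply v
      rw [hv] at h
      exact h.symm
    · have h := hg2 (g.symm u) (g.symm v)
      have hu : g (g.symm u) = u := g.apply_symm_apply u
      have hv : g (g.symm v) = v := g.apply_symm_apply v
      rw [hu, hv] at h
      exact h.symm

/-- The set of elements of `Aut(L)` acting as the `ω`-reflection in some root
belonging to `S`. -/
def ReflAutos (S : Set V) : Set (V ≃ₗ[ℂ] V) :=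
  {g | g ∈ AutL ∧ ∃ r ∈ S, ∀ v, g v = reflMap ω r v}

/-- The reflection group `R(L)`: the subgroup of `Aut(L)` generated by the
`ω`-reflections in all roots of `L`. -/
def RL : Subgroup (V ≃ₗ[ℂ] V) := Subgroup.closure (ReflAutos {r | IsRoot r})

/-- Two roots are adjacent when `|⟨a,b⟩| = √3`, i.e. when their `ω`-reflections braid. -/
def Adj (a b : V) : Prop := ‖herm a b‖ = Real.sqrt 3

/-- A set of roots is connected if the graph given by adjacency on it is connected. -/
def ConnectedSet (Φ : Set V) : Prop :=
  ∀ a ∈ Φ, ∀ b ∈ Φ, Relation.ReflTransGen (fun x y => x ∈ Φ ∧ y ∈ Φ ∧ Adj x y) a b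

/-- `Rad Φ` is the radical of a set `Φ` of roots: the closure of `Φ` under reflecting
members of the set in each other (and identification of unit multiples). -/
inductive Rad (Φ : Set V) : V → Prop
  | base {r : V} : r ∈ Φ → Rad Φ r
  | refl {a b : V} : Rad Φ a → Rad Φ b → Rad Φ (reflMap ω a b)
  | inv {a b : V} : Rad Φ a → Rad Φ b → Rad Φ (reflMap (conj ω) a b)
  | unit {u : ℂ} {r : V} : EisUnit u → Rad Φ r → Rad Φ (u • r)

/-- Shorthand for the entry `-θω²` occurring in the coordinates of the 26 roots. -/
def qc : ℂ := -(θ * ω ^ 2)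

/- The 26 roots of the diagram `D` in the coordinate system `3E₈ ⊕ H`. -/

def rA : V := ![0, 0, 0, 0, 0, 0, 0, 0, 0, 0, 0, 0, 1, ω ^ 2]
def rC1 : V := ![qc, 0, 0, 0, 0, 0, 0, 0, 0, 0, 0, 0, 0, 0]
def rC2 : V := ![0, 0, 0, 0, qc, 0, 0, 0, 0, 0, 0, 0, 0, 0]
def rC3 : V := ![0, 0, 0, 0, 0, 0, 0, 0, qc, 0, 0, 0, 0, 0]
def rE1 : V := ![0, qc, 0, 0, 0, 0, 0, 0, 0, 0, 0, 0, 0, 0]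
def rE2 : V := ![0, 0, 0, 0, 0, qc, 0, 0, 0, 0, 0, 0, 0, 0]
def rE3 : V := ![0, 0, 0, 0, 0, 0, 0, 0, 0, qc, 0, 0, 0, 0]
def rA1 : V := ![0, 0, 0, 0, 0, 0, 0, qc, 0, 0, 0, qc, ω, ω ^ 2]
def rA2 : V := ![0, 0, 0, qc, 0, 0, 0, 0, 0, 0, 0, qc, ω, ω ^ 2]
def rA3 : V := ![0, 0, 0, qc, 0, 0, 0, qc, 0, 0, 0, 0, ω, ω ^ 2]
def rG1 : V := ![0, 0, 0, qc, 0, 0, -qc, qc, 0, 0, -qc, qc, 2 * ω, 2 * ω ^ 2]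
def rG2 : V := ![0, 0, -qc, qc, 0, 0, 0, qc, 0, 0, -qc, qc, 2 * ω, 2 * ω ^ 2]
def rG3 : V := ![0, 0, -qc, qc, 0, 0, -qc, qc, 0, 0, 0, qc, 2 * ω, 2 * ω ^ 2]
def rF : V := ![0, 1, 1, -2, 0, 1, 1, -2, 0, 1, 1, -2, -2 + ω, -θ]
def rB1 : V := ![1, 0, 1, -1, 0, 0, 0, 0, 0, 0, 0, 0, -1, 0]
def rB2 : V := ![0, 0, 0, 0, 1, 0, 1, -1, 0, 0, 0, 0, -1, 0]
def rB3 : V := ![0, 0, 0, 0, 0, 0, 0, 0, 1, 0, 1, -1, -1, 0]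
def rD1 : V := ![1, 1, -1, 0, 0, 0, 0, 0, 0, 0, 0, 0, 0, 0]
def rD2 : V := ![0, 0, 0, 0, 1, 1, -1, 0, 0, 0, 0, 0, 0, 0]
def rD3 : V := ![0, 0, 0, 0, 0, 0, 0, 0, 1, 1, -1, 0, 0, 0]
def rF1 : V := ![0, 1, 1, 1, 0, 0, 0, 0, 0, 0, 0, 0, 0, 0]
def rF2 : V := ![0, 0, 0, 0, 0, 1, 1, 1, 0, 0, 0, 0, 0, 0]
def rF3 : V := ![0, 0, 0, 0, 0, 0, 0, 0, 0, 1, 1, 1, 0, 0]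
def rZ1 : V := ![0, 1, 1, -2, 1, 0, 1, -1, 1, 0, 1, -1, qc, -θ]
def rZ2 : V := ![1, 0, 1, -1, 0, 1, 1, -2, 1, 0, 1, -1, qc, -θ]
def rZ3 : V := ![1, 0, 1, -1, 1, 0, 1, -1, 0, 1, 1, -2, qc, -θ]

/-- The 13 roots of `D` labelled by the points of `P²(𝔽₃)`. -/
def pt : Fin 13 → V :=
  ![rA, rC1, rC2, rC3, rE1, rE2, rE3, rA1, rA2, rA3, rG1, rG2, rG3]

/-- The 13 roots of `D` labelled by the lines of `P²(𝔽₃)`. -/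
def lnr : Fin 13 → V :=
  ![rF, rB1, rB2, rB3, rD1, rD2, rD3, rF1, rF2, rF3, rZ1, rZ2, rZ3]

/-- The 26 roots of the diagram `D` (the incidence graph of `P²(𝔽₃)`). -/
def D26 : Set V := Set.range pt ∪ Set.range lnr

/-- The 16 roots forming the `M₆₆₆` diagram. -/
def M16 : Set V :=
  Set.range
    (![rA, rB1, rB2, rB3, rC1, rC2, rC3, rD1, rD2, rD3, rE1, rE2, rE3, rF1, rF2, rF3] :
      Fin 16 → V)

/-- The 26 vectors `(ρ₁,…,ρ₂₆) = (x₁,…,x₁₃, ξl₁,…,ξl₁₃)`. -/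
def ρv : Fin 26 → V := fun i =>
  if h : (i : ℕ) < 13 then pt ⟨(i : ℕ), h⟩
  else ξ • lnr ⟨(i : ℕ) - 13, by have := i.isLt; omega⟩

/-- The Weyl vector `ρ̄ = (Σ points + ξ Σ lines)/26`. -/
def ρbar : V := (26 : ℂ)⁻¹ • ((∑ i : Fin 13, pt i) + ξ • ∑ i : Fin 13, lnr i)

/-- The height of a root: `ht(r) = |⟨ρ̄, r⟩| / |ρ̄|²`. -/
def ht (r : V) : ℝ := ‖herm ρbar r‖ / ‖herm ρbar ρbar‖

/-!
The vectors `ρ₁, …, ρ₂₆` have the real Gram matrix `-3 + √3 A`, where `A` is the adjacency matrix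
of the incidence graph of `P²(𝔽₃)`: twisting the lines by `ξ` turns the inner product `1 - ω = √3 ξ`
of an incident line and point into `√3`. Hence the form takes values in `√3 ℤ[ξ]` on the
`ℤ[ξ]`-span of the `ρᵢ`. Since `1 - ω` and `1 - ω̄` are unit multiples of `√3`, reflecting one
vector of norm `-3` of this span in another subtracts a `ℤ[ξ]`-multiple, so the span contains
`rad(D)`. Since the incidence graph is regular of degree `4`, all rows of the Gram matrix have
the same sum, so the barycenter `ρ̄` pairs equally with all `ρᵢ`, and therefore with itself.
-/

section SesquilinearForm

lemma form_mem_of_mem_span {A E : Type*} [CommRing A] [StarRing A] [AddCommGroup E] [Module A E]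
    {B : E →ₗ⋆[A] E →ₗ[A] A} {S : Subring A} (hS : ∀ c ∈ S, conj c ∈ S) {I : Submodule S A}
    {X : Set E} (hX : ∀ x ∈ X, ∀ y ∈ X, B x y ∈ I) {u v : E}
    (hu : u ∈ Submodule.span S X) (hv : v ∈ Submodule.span S X) : B u v ∈ I := by
  induction hu, hv using Submodule.span_induction₂ with
  | mem_mem x y hx hy => exact hX x hx y hy
  | zero_left y _ => simp
  | zero_right x _ => simp
  | add_left x y z _ _ _ hx hy => simpa using I.add_mem hx hy
  | add_right x y z _ _ _ hx hy => simpa using I.add_mem hx hy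
  | smul_left c x y _ _ h =>
    have hc : B (c • x) y = (⟨conj (c : A), hS c c.2⟩ : S) • B x y := by
      simp [Subring.smul_def]
    exact hc ▸ I.smul_mem _ h
  | smul_right c x y _ _ h =>
    have hc : B x (c • y) = c • B x y := by simp [Subring.smul_def]
    exact hc ▸ I.smul_mem _ h

variable {𝕜 E : Type*} [Field 𝕜] [StarRing 𝕜] [AddCommGroup E] [Module 𝕜 E]

/-- The `μ`-reflection in `a` with respect to the sesquilinear form `B`: it fixes the orthogonal
complement of `a` and scales `a` by `μ`, provided `B a a ≠ 0`. -/
def complexReflection (B : E →ₗ⋆[𝕜] E →ₗ[𝕜] 𝕜) (μ : 𝕜) (a v : E) : E :=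
  v - ((1 - μ) * B a v / B a a) • a

variable {B : E →ₗ⋆[𝕜] E →ₗ[𝕜] 𝕜}

lemma form_complexReflection (hB : B.IsSymm) {μ : 𝕜} (hμ : conj μ * μ = 1) {a : E}
    (ha : B a a ≠ 0) (u v : E) :
    B (complexReflection B μ a u) (complexReflection B μ a v) = B u v := by
  have hua : conj (B a u) = B u a := hB.eq a u
  have haa : conj (B a a) = B a a := hB.eq a a
  simp only [complexReflection, map_sub, map_smulₛₗ, LinearMap.sub_apply, LinearMap.smul_apply,
    smul_eq_mul, map_div₀, map_mul, map_one, hua, haa, RingHom.id_apply]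
  field_simp
  linear_combination B u a * B a v * hμ

lemma complexReflection_mem {S : Subring 𝕜} {M : Submodule S E} {μ : 𝕜} {a v : E} (ha : a ∈ M)
    (hv : v ∈ M) (hμ : (1 - μ) * B a v / B a a ∈ S) : complexReflection B μ a v ∈ M :=
  M.sub_mem hv (M.smul_mem (⟨_, hμ⟩ : S) ha)

variable {ι : Type*} [Fintype ι] {ρ : ι → E} {c : 𝕜}

lemma form_barycenter_apply (hρ : ∀ j, ∑ i, B (ρ i) (ρ j) = c) (j : ι) :
    B ((Fintype.card ι : 𝕜)⁻¹ • ∑ i, ρ i) (ρ j) = (Fintype.card ι : 𝕜)⁻¹ * c := by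
  simp [map_smulₛₗ, map_sum, LinearMap.sum_apply, hρ]

lemma form_barycenter_self (hρ : ∀ j, ∑ i, B (ρ i) (ρ j) = c) :
    B ((Fintype.card ι : 𝕜)⁻¹ • ∑ i, ρ i) ((Fintype.card ι : 𝕜)⁻¹ • ∑ i, ρ i) =
      (Fintype.card ι : 𝕜)⁻¹ * c := by
  rw [map_smul, map_sum, Finset.sum_congr rfl fun j _ => form_barycenter_apply hρ j,
    Finset.sum_const, Finset.card_univ, nsmul_eq_mul, smul_eq_mul]
  grind

end SesquilinearForm

section Constants

lemma conj_ξ : conj ξ = Complex.exp (Real.pi * Complex.I / 6) := by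
  rw [ξ, ← Complex.exp_conj]
  simp [map_ofNat]

lemma conj_ξ_mul_ξ : conj ξ * ξ = 1 := by
  rw [conj_ξ, ξ, ← Complex.exp_add, neg_div, add_neg_cancel, Complex.exp_zero]

lemma ξ_add_conj_ξ : ξ + conj ξ = (√3 : ℝ) := by
  have hre : ξ.re = √3 / 2 := by
    rw [ξ, show -((Real.pi : ℂ) * Complex.I) / 6 = (-(Real.pi / 6) : ℝ) * Complex.I by
      push_cast; ring, Complex.exp_ofReal_mul_I_re, Real.cos_neg, Real.cos_pi_div_six]
  rw [Complex.add_conj, hre, mul_div_cancel₀ _ two_ne_zero]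

lemma ω_eq_neg_ξ_sq : ω = -ξ ^ 2 := by
  rw [ω, ξ, ← Complex.exp_nat_mul, ← neg_one_mul, ← Complex.exp_pi_mul_I, ← Complex.exp_add]
  congr 1
  push_cast
  ring

lemma sqrt_three_sq : ((√3 : ℝ) : ℂ) ^ 2 = 3 := by
  rw [← Complex.ofReal_pow, Real.sq_sqrt (by norm_num), Complex.ofReal_ofNat]

lemma one_sub_ω : 1 - ω = ξ * (√3 : ℝ) := by
  rw [ω_eq_neg_ξ_sq, ← ξ_add_conj_ξ]
  linear_combination -conj_ξ_mul_ξ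

lemma one_sub_conj_ω : 1 - conj ω = conj ξ * (√3 : ℝ) := by
  simpa using congrArg conj one_sub_ω

lemma conj_ω_mul_ω : conj ω * ω = 1 := by
  rw [ω_eq_neg_ξ_sq, map_neg, map_pow, neg_mul_neg, ← mul_pow, conj_ξ_mul_ξ, one_pow]

lemma conj_ω : conj ω = -1 - ω := by
  have hsum : (ξ + conj ξ) ^ 2 = 3 := by rw [ξ_add_conj_ξ, sqrt_three_sq]
  rw [ω_eq_neg_ξ_sq, map_neg, map_pow]
  linear_combination -hsum + 2 * conj_ξ_mul_ξ

lemma ω_sq : ω ^ 2 = -1 - ω := by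
  linear_combination ω * conj_ω - conj_ω_mul_ω

lemma θ_eq : θ = 1 + 2 * ω := by
  rw [θ, conj_ω]
  ring

lemma qc_eq : qc = ω - 1 := by
  rw [qc, θ_eq]
  linear_combination (1 - 2 * ω) * ω_sq

end Constants

section CoefficientRing

/-- The coefficient ring `ℤ[ξ]`. -/
abbrev ZXi : Subring ℂ := Subring.closure {ξ}

lemma ξ_mem_ZXi : ξ ∈ ZXi := Subring.subset_closure rfl

lemma ω_mem_ZXi : ω ∈ ZXi :=
  ω_eq_neg_ξ_sq ▸ neg_mem (pow_mem ξ_mem_ZXi 2)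

lemma conj_ξ_mem_ZXi : conj ξ ∈ ZXi := by
  have h : conj ξ = ξ * (1 + ω) := by
    have hω : conj ω = -conj ξ ^ 2 := by simpa using congrArg conj ω_eq_neg_ξ_sq
    linear_combination -ξ * conj_ω + ξ * hω - conj ξ * conj_ξ_mul_ξ
  exact h ▸ mul_mem ξ_mem_ZXi (add_mem (one_mem _) ω_mem_ZXi)

lemma conj_mem_ZXi {z : ℂ} (hz : z ∈ ZXi) : conj z ∈ ZXi := by
  have h : ZXi ≤ ZXi.comap (starRingEnd ℂ) := by
    simpa [Subring.closure_le] using conj_ξ_mem_ZXi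
  exact h hz

lemma EisUnit.mem_ZXi {u : ℂ} (hu : EisUnit u) : u ∈ ZXi := by
  have h := pow_mem ω_mem_ZXi 2
  rcases hu with rfl | rfl | rfl | rfl | rfl | rfl <;> simp [ω_mem_ZXi, h]

lemma EisUnit.conj_mul_self {u : ℂ} (hu : EisUnit u) : conj u * u = 1 := by
  rcases hu with rfl | rfl | rfl | rfl | rfl | rfl <;>
    simp [← mul_pow, conj_ω_mul_ω]

/-- The ideal `√3 ℤ[ξ]`, viewed as a `ℤ[ξ]`-submodule of `ℂ`. -/
def sqrtThreeIdeal : Submodule ZXi ℂ := Submodule.span ZXi {((√3 : ℝ) : ℂ)}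

lemma sqrt_three_mem_sqrtThreeIdeal : ((√3 : ℝ) : ℂ) ∈ sqrtThreeIdeal :=
  Submodule.mem_span_singleton_self _

lemma neg_three_mem_sqrtThreeIdeal : (-3 : ℂ) ∈ sqrtThreeIdeal := by
  have hmem : -((√3 : ℝ) : ℂ) ∈ ZXi :=
    ξ_add_conj_ξ ▸ neg_mem (add_mem ξ_mem_ZXi conj_ξ_mem_ZXi)
  refine Submodule.mem_span_singleton.mpr ⟨⟨_, hmem⟩, ?_⟩
  rw [Subring.smul_def, smul_eq_mul, neg_mul, ← sq, sqrt_three_sq]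

lemma mul_sqrt_three_mul_div_neg_three_mem_ZXi {e z : ℂ} (he : e ∈ ZXi)
    (hz : z ∈ sqrtThreeIdeal) : e * (√3 : ℝ) * z / -3 ∈ ZXi := by
  obtain ⟨d, rfl⟩ := Submodule.mem_span_singleton.mp hz
  have h : e * (√3 : ℝ) * (d • ((√3 : ℝ) : ℂ)) / -3 = -(e * d) := by
    rw [Subring.smul_def, smul_eq_mul]
    linear_combination (-(e * d) / 3) * sqrt_three_sq
  exact h ▸ neg_mem (mul_mem he d.2)

end CoefficientRing

section Radical

/-- The Hermitian form `herm` of `L` as a sesquilinear map. -/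
def hermForm : V →ₗ⋆[ℂ] V →ₗ[ℂ] ℂ :=
  LinearMap.mk₂'ₛₗ (starRingEnd ℂ) (RingHom.id ℂ) herm
    (fun u v w => by
      simp only [herm, Pi.add_apply, map_add, add_mul, Finset.sum_add_distrib]; ring)
    (fun c u v => by
      simp only [herm, Pi.smul_apply, smul_eq_mul, map_mul, mul_assoc, ← Finset.mul_sum]; ring)
    (fun u v w => by
      simp only [herm, Pi.add_apply, mul_add, Finset.sum_add_distrib]; ring)
    (fun c u v => by
      simp only [herm, Pi.smul_apply, smul_eq_mul, mul_left_comm _ c, ← Finset.mul_sum,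
        RingHom.id_apply]; ring)

lemma hermForm_apply (u v : V) : hermForm u v = herm u v := rfl

lemma hermForm_isSymm : hermForm.IsSymm where
  eq u v := by
    simp only [hermForm_apply, herm, map_add, map_neg, map_sum, map_mul, Complex.conj_conj,
      mul_comm]
    ring

lemma reflMap_eq_complexReflection (μ : ℂ) (a v : V) :
    reflMap μ a v = complexReflection hermForm μ a v := rfl

lemma Rad.hermForm_self {Φ : Set V} {c : ℂ} (hc : c ≠ 0) (hΦ : ∀ r ∈ Φ, hermForm r r = c) {r : V}
    (hr : Rad Φ r) : hermForm r r = c := by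
  induction hr with
  | base h => exact hΦ _ h
  | refl _ _ ha hb =>
    rw [reflMap_eq_complexReflection,
      form_complexReflection hermForm_isSymm conj_ω_mul_ω (ha ▸ hc), hb]
  | inv _ _ ha hb =>
    have hω : conj (conj ω) * conj ω = 1 := by rw [← map_mul, conj_ω_mul_ω, map_one]
    rw [reflMap_eq_complexReflection, form_complexReflection hermForm_isSymm hω (ha ▸ hc), hb]
  | @unit u r hu _ ih =>
    rw [map_smul, LinearMap.map_smulₛₗ₂, ih, smul_eq_mul, smul_eq_mul, ← mul_assoc, mul_comm u,
      hu.conj_mul_self, one_mul]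

lemma Rad.mem_of_hermForm_mem_sqrtThreeIdeal {Φ : Set V} {M : Submodule ZXi V} (hΦM : Φ ⊆ M)
    (hΦ : ∀ r ∈ Φ, hermForm r r = -3)
    (hM : ∀ u ∈ M, ∀ v ∈ M, hermForm u v ∈ sqrtThreeIdeal) {r : V} (hr : Rad Φ r) : r ∈ M := by
  induction hr with
  | base h => exact hΦM h
  | refl ha _ haM hbM =>
    rw [reflMap_eq_complexReflection]
    refine complexReflection_mem haM hbM ?_
    rw [one_sub_ω, ha.hermForm_self (by norm_num) hΦ]
    exact mul_sqrt_three_mul_div_neg_three_mem_ZXi ξ_mem_ZXi (hM _ haM _ hbM)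
  | inv ha _ haM hbM =>
    rw [reflMap_eq_complexReflection]
    refine complexReflection_mem haM hbM ?_
    rw [one_sub_conj_ω, ha.hermForm_self (by norm_num) hΦ]
    exact mul_sqrt_three_mul_div_neg_three_mem_ZXi conj_ξ_mem_ZXi (hM _ haM _ hbM)
  | unit hu _ ih => exact M.smul_mem (⟨_, hu.mem_ZXi⟩ : ZXi) ih

end Radical

section EisensteinModel

/-- The Eisenstein integers as pairs of integers, so that the inner products of the 26 roots
can be evaluated by computation. -/
abbrev Eis : Type := QuadraticAlgebra ℤ (-1) (-1)

/-- The embedding of the Eisenstein integers into `ℂ`. -/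
def eisToComplex : Eis →ₐ[ℤ] ℂ :=
  QuadraticAlgebra.lift ⟨ω, by rw [← sq, ω_sq]; simp [sub_eq_add_neg]⟩

lemma eisToComplex_omega : eisToComplex QuadraticAlgebra.omega = ω := by
  simp [eisToComplex]

lemma eisToComplex_mk (x y : ℤ) : eisToComplex ⟨x, y⟩ = x + y * ω := by
  simp [QuadraticAlgebra.mk_eq_add_smul_omega, eisToComplex_omega]

lemma eisToComplex_star (z : Eis) : eisToComplex (star z) = conj (eisToComplex z) := by
  obtain ⟨x, y⟩ := z
  simp only [QuadraticAlgebra.star_mk, eisToComplex_mk, map_add, map_mul, map_intCast, conj_ω]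
  push_cast
  ring

/-- `θ` as an Eisenstein integer. -/
def thetaEis : Eis := 1 + 2 * QuadraticAlgebra.omega

lemma eisToComplex_thetaEis : eisToComplex thetaEis = θ := by
  rw [thetaEis, map_add, map_one, map_mul, map_ofNat, eisToComplex_omega, θ_eq]

/-- The Hermitian form `herm` on vectors with Eisenstein integer coordinates. -/
def hermEis (u v : Fin 14 → Eis) : Eis :=
  -(∑ i : Fin 12, star (u (Fin.castLE (by norm_num) i)) * v (Fin.castLE (by norm_num) i)) +
    star (u 12) * star thetaEis * v 13 + star (u 13) * thetaEis * v 12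

lemma eisToComplex_hermEis (u v : Fin 14 → Eis) :
    eisToComplex (hermEis u v) = hermForm (eisToComplex ∘ u) (eisToComplex ∘ v) := by
  simp only [hermEis, hermForm_apply, herm, map_add, map_neg, map_sum, map_mul,
    eisToComplex_star, eisToComplex_thetaEis, Function.comp_apply]

/-- The Eisenstein coordinates of the point roots `pt`. -/
def ptEis : Fin 13 → Fin 14 → Eis :=
  let w : Eis := QuadraticAlgebra.omega
  let q : Eis := w - 1
  ![![0, 0, 0, 0, 0, 0, 0, 0, 0, 0, 0, 0, 1, w ^ 2],
    ![q, 0, 0, 0, 0, 0, 0, 0, 0, 0, 0, 0, 0, 0],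
    ![0, 0, 0, 0, q, 0, 0, 0, 0, 0, 0, 0, 0, 0],
    ![0, 0, 0, 0, 0, 0, 0, 0, q, 0, 0, 0, 0, 0],
    ![0, q, 0, 0, 0, 0, 0, 0, 0, 0, 0, 0, 0, 0],
    ![0, 0, 0, 0, 0, q, 0, 0, 0, 0, 0, 0, 0, 0],
    ![0, 0, 0, 0, 0, 0, 0, 0, 0, q, 0, 0, 0, 0],
    ![0, 0, 0, 0, 0, 0, 0, q, 0, 0, 0, q, w, w ^ 2],
    ![0, 0, 0, q, 0, 0, 0, 0, 0, 0, 0, q, w, w ^ 2],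
    ![0, 0, 0, q, 0, 0, 0, q, 0, 0, 0, 0, w, w ^ 2],
    ![0, 0, 0, q, 0, 0, -q, q, 0, 0, -q, q, 2 * w, 2 * w ^ 2],
    ![0, 0, -q, q, 0, 0, 0, q, 0, 0, -q, q, 2 * w, 2 * w ^ 2],
    ![0, 0, -q, q, 0, 0, -q, q, 0, 0, 0, q, 2 * w, 2 * w ^ 2]]

/-- The Eisenstein coordinates of the line roots `lnr`. -/
def lnrEis : Fin 13 → Fin 14 → Eis :=
  let w : Eis := QuadraticAlgebra.omega
  let q : Eis := w - 1
  ![![0, 1, 1, -2, 0, 1, 1, -2, 0, 1, 1, -2, -2 + w, -thetaEis],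
    ![1, 0, 1, -1, 0, 0, 0, 0, 0, 0, 0, 0, -1, 0],
    ![0, 0, 0, 0, 1, 0, 1, -1, 0, 0, 0, 0, -1, 0],
    ![0, 0, 0, 0, 0, 0, 0, 0, 1, 0, 1, -1, -1, 0],
    ![1, 1, -1, 0, 0, 0, 0, 0, 0, 0, 0, 0, 0, 0],
    ![0, 0, 0, 0, 1, 1, -1, 0, 0, 0, 0, 0, 0, 0],
    ![0, 0, 0, 0, 0, 0, 0, 0, 1, 1, -1, 0, 0, 0],
    ![0, 1, 1, 1, 0, 0, 0, 0, 0, 0, 0, 0, 0, 0],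
    ![0, 0, 0, 0, 0, 1, 1, 1, 0, 0, 0, 0, 0, 0],
    ![0, 0, 0, 0, 0, 0, 0, 0, 0, 1, 1, 1, 0, 0],
    ![0, 1, 1, -2, 1, 0, 1, -1, 1, 0, 1, -1, q, -thetaEis],
    ![1, 0, 1, -1, 0, 1, 1, -2, 1, 0, 1, -1, q, -thetaEis],
    ![1, 0, 1, -1, 1, 0, 1, -1, 0, 1, 1, -2, q, -thetaEis]]

lemma comp_vecCons {α β : Type*} {n : ℕ} (f : α → β) (a : α) (v : Fin n → α) :
    f ∘ Matrix.vecCons a v = Matrix.vecCons (f a) (f ∘ v) :=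
  Fin.comp_cons f a v

lemma comp_vecEmpty {α β : Type*} (f : α → β) : f ∘ ![] = ![] :=
  Subsingleton.elim _ _

lemma eisToComplex_comp_ptEis (i : Fin 13) : eisToComplex ∘ ptEis i = pt i := by
  fin_cases i <;>
    simp [ptEis, pt, rA, rC1, rC2, rC3, rE1, rE2, rE3, rA1, rA2, rA3, rG1, rG2, rG3,
      comp_vecCons, comp_vecEmpty, eisToComplex_omega, qc_eq, map_ofNat]

lemma eisToComplex_comp_lnrEis (i : Fin 13) : eisToComplex ∘ lnrEis i = lnr i := by
  fin_cases i <;>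
    simp [lnrEis, lnr, rF, rB1, rB2, rB3, rD1, rD2, rD3, rF1, rF2, rF3, rZ1, rZ2, rZ3,
      comp_vecCons, comp_vecEmpty, eisToComplex_omega, eisToComplex_thetaEis, qc_eq, map_ofNat]

/-- Incidence of the `l`-th line and the `x`-th point of `P²(𝔽₃)`, read off from the
inner product of the corresponding roots. -/
def Incident (l x : Fin 13) : Prop := hermEis (lnrEis l) (ptEis x) ≠ 0

instance (l x : Fin 13) : Decidable (Incident l x) :=
  inferInstanceAs (Decidable (_ ≠ _))

lemma card_points_on_line : ∀ l, Finset.card {x | Incident l x} = 4 := by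
  decide +kernel

lemma card_lines_through_point : ∀ x, Finset.card {l | Incident l x} = 4 := by
  decide +kernel

lemma hermEis_ptEis_ptEis :
    ∀ x y, hermEis (ptEis x) (ptEis y) = if x = y then -3 else 0 := by
  decide +kernel

lemma hermEis_lnrEis_lnrEis :
    ∀ l m, hermEis (lnrEis l) (lnrEis m) = if l = m then -3 else 0 := by
  decide +kernel

lemma hermEis_lnrEis_ptEis :
    ∀ l x, hermEis (lnrEis l) (ptEis x) =
      if Incident l x then 1 - QuadraticAlgebra.omega else 0 := by
  decide +kernel

end EisensteinModel

section GramMatrix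

lemma hermForm_pt_pt (x y : Fin 13) : hermForm (pt x) (pt y) = if x = y then -3 else 0 := by
  rw [← eisToComplex_comp_ptEis, ← eisToComplex_comp_ptEis, ← eisToComplex_hermEis,
    hermEis_ptEis_ptEis, apply_ite eisToComplex, map_neg, map_ofNat, map_zero]

lemma hermForm_lnr_lnr (l m : Fin 13) :
    hermForm (lnr l) (lnr m) = if l = m then -3 else 0 := by
  rw [← eisToComplex_comp_lnrEis, ← eisToComplex_comp_lnrEis, ← eisToComplex_hermEis,
    hermEis_lnrEis_lnrEis, apply_ite eisToComplex, map_neg, map_ofNat, map_zero]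

lemma hermForm_lnr_pt (l x : Fin 13) :
    hermForm (lnr l) (pt x) = if Incident l x then 1 - ω else 0 := by
  rw [← eisToComplex_comp_lnrEis, ← eisToComplex_comp_ptEis, ← eisToComplex_hermEis,
    hermEis_lnrEis_ptEis, apply_ite eisToComplex, map_sub, map_one, eisToComplex_omega, map_zero]

lemma hermForm_ξ_smul_lnr_ξ_smul_lnr (l m : Fin 13) :
    hermForm (ξ • lnr l) (ξ • lnr m) = if l = m then -3 else 0 := by
  rw [map_smul, LinearMap.map_smulₛₗ₂, smul_smul, mul_comm, conj_ξ_mul_ξ, one_smul,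
    hermForm_lnr_lnr]

lemma hermForm_ξ_smul_lnr_pt (l x : Fin 13) :
    hermForm (ξ • lnr l) (pt x) = if Incident l x then ((√3 : ℝ) : ℂ) else 0 := by
  rw [LinearMap.map_smulₛₗ₂, hermForm_lnr_pt, one_sub_ω, smul_ite, smul_zero, smul_eq_mul,
    ← mul_assoc, conj_ξ_mul_ξ, one_mul]

lemma hermForm_pt_ξ_smul_lnr (x l : Fin 13) :
    hermForm (pt x) (ξ • lnr l) = if Incident l x then ((√3 : ℝ) : ℂ) else 0 := by
  rw [← hermForm_isSymm.eq, hermForm_ξ_smul_lnr_pt, apply_ite conj, Complex.conj_ofReal, map_zero]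

lemma ρv_castAdd (x : Fin 13) : ρv (Fin.castAdd 13 x) = pt x := by
  simp [ρv]

lemma ρv_natAdd (l : Fin 13) : ρv (Fin.natAdd 13 l) = ξ • lnr l := by
  simp [ρv]

lemma sum_ρv {A : Type*} [AddCommMonoid A] (f : V → A) :
    ∑ i, f (ρv i) = ∑ x, f (pt x) + ∑ l, f (ξ • lnr l) := by
  simpa only [ρv_castAdd, ρv_natAdd] using
    Fin.sum_univ_add (a := 13) (b := 13) fun i => f (ρv i)

lemma ρv_eq_pt_or_eq_ξ_smul_lnr (i : Fin 26) :
    (∃ x, ρv i = pt x) ∨ ∃ l, ρv i = ξ • lnr l := by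
  induction i using Fin.addCases (m := 13) (n := 13) with
  | left x => exact .inl ⟨x, ρv_castAdd x⟩
  | right l => exact .inr ⟨l, ρv_natAdd l⟩

lemma hermForm_ρv_mem_sqrtThreeIdeal (i j : Fin 26) :
    hermForm (ρv i) (ρv j) ∈ sqrtThreeIdeal := by
  have hite (p : Prop) [Decidable p] {z : ℂ} (hz : z ∈ sqrtThreeIdeal) :
      (if p then z else 0) ∈ sqrtThreeIdeal := by
    split_ifs
    exacts [hz, zero_mem _]
  rcases ρv_eq_pt_or_eq_ξ_smul_lnr i with ⟨x, hi⟩ | ⟨l, hi⟩ <;>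
    rcases ρv_eq_pt_or_eq_ξ_smul_lnr j with ⟨y, hj⟩ | ⟨m, hj⟩ <;> rw [hi, hj]
  · exact hermForm_pt_pt x y ▸ hite _ neg_three_mem_sqrtThreeIdeal
  · exact hermForm_pt_ξ_smul_lnr x m ▸ hite _ sqrt_three_mem_sqrtThreeIdeal
  · exact hermForm_ξ_smul_lnr_pt l y ▸ hite _ sqrt_three_mem_sqrtThreeIdeal
  · exact hermForm_ξ_smul_lnr_ξ_smul_lnr l m ▸ hite _ neg_three_mem_sqrtThreeIdeal

lemma sum_hermForm_ρv (j : Fin 26) :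
    ∑ i, hermForm (ρv i) (ρv j) = -3 + 4 * (√3 : ℝ) := by
  rw [sum_ρv fun u => hermForm u (ρv j)]
  rcases ρv_eq_pt_or_eq_ξ_smul_lnr j with ⟨x, hj⟩ | ⟨l, hj⟩
  · simp only [hj, hermForm_pt_pt, hermForm_ξ_smul_lnr_pt]
    simp [← Finset.sum_filter, card_lines_through_point]
  · simp only [hj, hermForm_pt_ξ_smul_lnr, hermForm_ξ_smul_lnr_ξ_smul_lnr]
    simp [← Finset.sum_filter, card_points_on_line, add_comm]

end GramMatrix

section WeylVector

lemma ρbar_eq_barycenter : ρbar = (Fintype.card (Fin 26) : ℂ)⁻¹ • ∑ i, ρv i := by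
  rw [ρbar, sum_ρv fun v => v, Finset.smul_sum, Fintype.card_fin, Nat.cast_ofNat]

lemma hermForm_ρbar_self : hermForm ρbar ρbar = (26 : ℂ)⁻¹ * (-3 + 4 * (√3 : ℝ)) := by
  rw [ρbar_eq_barycenter, form_barycenter_self sum_hermForm_ρv, Fintype.card_fin, Nat.cast_ofNat]

lemma hermForm_ρbar_ρv (i : Fin 26) : hermForm ρbar (ρv i) = hermForm ρbar ρbar := by
  rw [ρbar_eq_barycenter, form_barycenter_apply sum_hermForm_ρv,
    form_barycenter_self sum_hermForm_ρv]

lemma hermForm_ρbar_self_ne_zero : hermForm ρbar ρbar ≠ 0 := by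
  have hpos : (0 : ℝ) < 26⁻¹ * (-3 + 4 * √3) := by
    have : (1 : ℝ) ≤ √3 := Real.one_le_sqrt.mpr (by norm_num)
    linarith
  have hself : hermForm ρbar ρbar = ((26⁻¹ * (-3 + 4 * √3) : ℝ) : ℂ) := by
    rw [hermForm_ρbar_self]
    push_cast
    rfl
  exact hself ▸ Complex.ofReal_ne_zero.mpr hpos.ne'

lemma hermForm_ρbar_sum_smul_ρv (α : Fin 26 → ℂ) :
    hermForm ρbar (∑ i, α i • ρv i) = (∑ i, α i) * hermForm ρbar ρbar := by
  simp only [map_sum, map_smul, hermForm_ρbar_ρv, smul_eq_mul, Finset.sum_mul]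

end WeylVector

lemma hermForm_self_of_mem_D26 {r : V} (hr : r ∈ D26) : hermForm r r = -3 := by
  rcases hr with ⟨x, rfl⟩ | ⟨l, rfl⟩
  · rw [hermForm_pt_pt, if_pos rfl]
  · rw [hermForm_lnr_lnr, if_pos rfl]

lemma D26_subset_span_ρv : D26 ⊆ Submodule.span ZXi (Set.range ρv) := by
  rintro _ (⟨x, rfl⟩ | ⟨l, rfl⟩)
  · exact Submodule.subset_span ⟨_, ρv_castAdd x⟩
  · have hmem : ξ • lnr l ∈ Submodule.span ZXi (Set.range ρv) :=
      Submodule.subset_span ⟨_, ρv_natAdd l⟩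
    have hlnr : lnr l = (⟨conj ξ, conj_ξ_mem_ZXi⟩ : ZXi) • ξ • lnr l := by
      rw [Subring.smul_def, smul_smul, conj_ξ_mul_ξ, one_smul]
    exact hlnr ▸ Submodule.smul_mem _ _ hmem

lemma Rad.mem_span_ρv {r : V} (hr : Rad D26 r) : r ∈ Submodule.span ZXi (Set.range ρv) := by
  refine hr.mem_of_hermForm_mem_sqrtThreeIdeal D26_subset_span_ρv
    (fun _ => hermForm_self_of_mem_D26) fun u hu v hv => ?_
  refine form_mem_of_mem_span (fun _ => conj_mem_ZXi) ?_ hu hv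
  rintro _ ⟨i, rfl⟩ _ ⟨j, rfl⟩
  exact hermForm_ρv_mem_sqrtThreeIdeal i j

/-- Every root in `rad(D)` is a `ℤ[ξ]`-linear combination of `ρ₁,…,ρ₂₆`; consequently
`⟨ρ̄,r⟩/|ρ̄|²` is the sum of the coefficients, an algebraic integer in `ℤ[ξ]`, whose
absolute value is the height of `r`. -/
theorem stmt18 : ∀ r : V, Rad D26 r →
    ∃ α : Fin 26 → ℂ, (∀ i, α i ∈ Subring.closure ({ξ} : Set ℂ)) ∧
      r = ∑ i : Fin 26, α i • ρv i ∧
      herm ρbar r = (∑ i : Fin 26, α i) * herm ρbar ρbar ∧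
      ht r = ‖∑ i : Fin 26, α i‖ := by
  intro r hr
  obtain ⟨α, hα⟩ := (Submodule.mem_span_range_iff_exists_fun ZXi).mp hr.mem_span_ρv
  have hsum : r = ∑ i, (α i : ℂ) • ρv i := hα.symm
  have hherm : herm ρbar r = (∑ i, (α i : ℂ)) * herm ρbar ρbar := by
    rw [hsum]
    exact hermForm_ρbar_sum_smul_ρv _
  refine ⟨fun i => α i, fun i => (α i).2, hsum, hherm, ?_⟩
  rw [ht, hherm, norm_mul, mul_div_cancel_right₀]
  exact norm_ne_zero_iff.mpr hermForm_ρbar_self_ne_zero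

end Bimonster
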